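/- Let 𝒜 = {H_1,…,H_n} be a central hyperplane arrangement given by nonzero, pairwise non-proportional linear forms, and let 𝒞(𝒜) be its collection of signed circuits (minimal signed subsets X with ⋂_{i∈X⁺} H_i⁺ ∩ ⋂_{j∈X⁻} H_j⁻ = ∅). Then the ℚ-algebra homomorphism P(𝒞(𝒜)) → H⁰(M_1(𝒜)) sending x_i to the Heaviside function x_i is a well-defined isomorphism of ℚ-algebras. -/

import Mathlib

/-!
The map sends the polynomial ring to locally constant functions by `X i ↦ heaviside ω i`; it is
surjective with kernel exactly `pIdeal (signedCircuits ω)`.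

For `σ ⊆ {1,…,n}` let `e_σ = ∏_{i∈σ} x i · ∏_{i∉σ} (1 - x i)` (`signIdem`). Modulo the relations
`x a ^ 2 = x a`, every polynomial `p` equals `∑_σ p(σ) e_σ`, where `p(σ)` is its value at the
indicator vector of `σ` (`sub_sum_mem_pIdeal`). The function `e_σ` is the indicator of the chamber
with sign vector `σ`; that chamber is convex, hence a locally constant function is constant on it.
This gives surjectivity. For injectivity, `p(σ)` is the value of the image of `p` on the chamber
`σ` whenever this chamber is nonempty, so it remains to see that `e_σ` lies in the ideal
when the chamber is empty, i.e. that an infeasible sign vector contains a signed circuit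
(`exists_signedCircuit`).

The last point is linear programming duality. By Gordan's theorem (`gordan`, via Hahn–Banach) an
infeasible sign vector yields a nonzero nonnegative relation among the correspondingly signed
forms. A relation `c` of minimal support `S` has the property that no proper subset `T` of `S`
carries any nonzero relation `ν`: otherwise `c - t ν`, for suitable `t`, would be a nonzero
nonnegative relation of smaller support. Hence, by Gordan's theorem again, all sign patterns on
`T` are feasible, and `S` with the given signs is a signed circuit.
-/

/-!
Statement 10: for a central arrangement, `P(𝒞(𝒜))` is isomorphic to the algebra
`H⁰(M₁(𝒜))` of locally constant functions, via `x i ↦` (Heaviside function `x i`).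
-/

open MvPolynomial Set

variable {V : Type*} [NormedAddCommGroup V] [NormedSpace ℝ V] [FiniteDimensional ℝ V]
variable {n : ℕ}

/-- The complement `M₁(𝒜)` of the central arrangement given by the linear forms `ω i`. -/
def M₁ (ω : Fin n → V →ₗ[ℝ] ℝ) : Set V := {v | ∀ i, ω i v ≠ 0}

/-- The positive open half-space `H i⁺`. -/
def Hplus (ω : Fin n → V →ₗ[ℝ] ℝ) (i : Fin n) : Set V := {v | 0 < ω i v}

/-- The negative open half-space `H i⁻`. -/
def Hminus (ω : Fin n → V →ₗ[ℝ] ℝ) (i : Fin n) : Set V := {v | ω i v < 0}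

/-- The Heaviside function `x i` on `M₁(𝒜)`: `1` on `H i⁺` and `0` on `H i⁻`. -/
noncomputable def heaviside (ω : Fin n → V →ₗ[ℝ] ℝ) (i : Fin n) :
    LocallyConstant (M₁ ω) ℚ where
  toFun v := if 0 < ω i v.1 then 1 else 0
  isLocallyConstant := by
    rw [IsLocallyConstant.iff_exists_open]
    rintro ⟨v, hv⟩
    rcases lt_or_gt_of_ne (hv i) with h | h
    · refine ⟨{w : M₁ ω | ω i w.1 < 0}, ?_, h, fun w hw => ?_⟩
      · exact (isOpen_lt ((ω i).continuous_of_finiteDimensional.comp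
          continuous_subtype_val) continuous_const)
      · simp only [Set.mem_setOf_eq] at hw
        simp [not_lt.mpr hw.le, not_lt.mpr h.le]
    · refine ⟨{w : M₁ ω | 0 < ω i w.1}, ?_, h, fun w hw => ?_⟩
      · exact (isOpen_lt continuous_const ((ω i).continuous_of_finiteDimensional.comp
          continuous_subtype_val))
      · simp only [Set.mem_setOf_eq] at hw
        simp [hw, h]

/-- The signed circuits of the arrangement: minimal signed subsets `X = (X⁺, X⁻)` with
`⋂_{i∈X⁺} H i⁺ ∩ ⋂_{j∈X⁻} H j⁻ = ∅`. -/
def signedCircuits (ω : Fin n → V →ₗ[ℝ] ℝ) : Set (Finset (Fin n) × Finset (Fin n)) :=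
  {X | Disjoint X.1 X.2 ∧
    (⋂ i ∈ X.1, Hplus ω i) ∩ (⋂ j ∈ X.2, Hminus ω j) = ∅ ∧
    ∀ Y : Finset (Fin n) × Finset (Fin n), Disjoint Y.1 Y.2 →
      Y.1 ∪ Y.2 ⊂ X.1 ∪ X.2 →
      ((⋂ i ∈ Y.1, Hplus ω i) ∩ (⋂ j ∈ Y.2, Hminus ω j)).Nonempty}

/-- The ideal defining the Gelfand–Rybnikov algebra `P(𝒞)` of a collection `𝒞` of signed
subsets of `{1,…,n}`: generated by `x a ^ 2 - x a` and by
`(∏_{a∈X⁺} x a)·(∏_{a∈X⁻} (1 - x a))` for `X ∈ 𝒞`. -/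
noncomputable def pIdeal (𝒞 : Set (Finset (Fin n) × Finset (Fin n))) :
    Ideal (MvPolynomial (Fin n) ℚ) :=
  Ideal.span ({p | ∃ a : Fin n, p = X a ^ 2 - X a} ∪
    {p | ∃ C ∈ 𝒞, p = (∏ a ∈ C.1, X a) * ∏ a ∈ C.2, (1 - X a)})

/-- The algebra `P(𝒞)`. -/
abbrev PAlg (𝒞 : Set (Finset (Fin n) × Finset (Fin n))) := MvPolynomial (Fin n) ℚ ⧸ pIdeal 𝒞

/-! ### Infeasible sign vectors contain signed circuits -/

/-- The sign `±1` of `i` in the sign vector whose positive part is `σ`. -/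
noncomputable def sgnOf (σ : Finset (Fin n)) (i : Fin n) : ℝ := if i ∈ σ then 1 else -1

lemma sgnOf_mul_self (σ : Finset (Fin n)) (i : Fin n) : sgnOf σ i * sgnOf σ i = 1 := by
  unfold sgnOf; split_ifs <;> norm_num

/-- Gordan's theorem for the subfamily of `w` indexed by `T`; the relation is extended by zero
outside `T`. The proof separates the cone `{x | ∀ i ∈ T, 0 < x i}` from the range of
`v ↦ (w i v)_i`. -/
lemma gordan {V : Type*} [AddCommGroup V] [Module ℝ V] (w : Fin n → V →ₗ[ℝ] ℝ)
    (T : Finset (Fin n)) (h : ¬ ∃ v, ∀ i ∈ T, 0 < w i v) :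
    ∃ c : Fin n → ℝ, (∀ i, 0 ≤ c i) ∧ (∃ i, c i ≠ 0) ∧ (∀ i, i ∉ T → c i = 0) ∧
      ∀ v, ∑ i, c i * w i v = 0 := by
  classical
  let L : V →ₗ[ℝ] (Fin n → ℝ) := LinearMap.pi w
  let s : Set (Fin n → ℝ) := {x | ∀ i ∈ T, 0 < x i}
  have hs₁ : Convex ℝ s := by
    intro x hx y hy a b ha hb hab i hi
    have h1 := hx i hi
    have h2 := hy i hi
    simp only [Pi.add_apply, Pi.smul_apply, smul_eq_mul]
    rcases ha.eq_or_lt with rfl | ha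
    · have : b = 1 := by linarith
      subst this; simpa using h2
    · nlinarith [mul_pos ha h1, mul_nonneg hb h2.le]
  have hs₂ : IsOpen s := by
    have : s = ⋂ i ∈ T, {x : Fin n → ℝ | 0 < x i} := by ext x; simp [s]
    rw [this]
    exact isOpen_biInter_finset fun i _ => isOpen_lt continuous_const (continuous_apply i)
  have hdisj : Disjoint s (LinearMap.range L : Set (Fin n → ℝ)) := by
    rw [Set.disjoint_left]
    rintro x hx ⟨v, rfl⟩
    exact h ⟨v, fun i hi => hx i hi⟩
  obtain ⟨f, u, hfs, hft⟩ :=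
    geometric_hahn_banach_open hs₁ hs₂ (LinearMap.range L).convex hdisj
  have hu : u ≤ 0 := by simpa using hft 0 (Submodule.zero_mem _)
  have hneg : ∀ x ∈ s, f x < 0 := fun x hx => (hfs x hx).trans_le hu
  have hrange : ∀ v, f (L v) = 0 := by
    intro v
    by_contra hne
    have := hft (L (((u - 1) / f (L v)) • v)) ⟨_, rfl⟩
    rw [map_smul, map_smul, smul_eq_mul, div_mul_cancel₀ _ hne] at this
    linarith
  have hexp : ∀ x : Fin n → ℝ, f x = ∑ i, f (Pi.single i 1) * x i := by
    intro x
    conv_lhs => rw [pi_eq_sum_univ' x]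
    rw [map_sum]
    refine Finset.sum_congr rfl fun i _ => ?_
    rw [map_smul, smul_eq_mul, mul_comm]
  have h1 : f 1 < 0 := hneg _ (fun i _ => by simp)
  have hline : ∀ (i : Fin n) (t : ℝ), (i ∈ T → 0 ≤ t) → f 1 + t * f (Pi.single i 1) < 0 := by
    intro i t ht
    have := hneg (1 + t • Pi.single i (1 : ℝ)) (by
      intro j hj
      by_cases hij : j = i
      · subst hij
        have := ht hj
        simp; linarith
      · simp [hij])
    simpa using this
  refine ⟨fun i => - f (Pi.single i 1), fun i => ?_, ?_, fun i hi => ?_, fun v => ?_⟩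
  · by_contra! hc
    have hpos : 0 < f (Pi.single i 1) := by linarith
    have := hline i (-f 1 / f (Pi.single i 1))
      (fun _ => div_nonneg (by linarith) hpos.le)
    rw [div_mul_cancel₀ _ hpos.ne'] at this
    linarith
  · by_contra! hc
    rw [hexp] at h1
    have : ∀ i, f (Pi.single i 1) = 0 := fun i => by simpa using hc i
    simp [this] at h1
  · by_contra hc
    have hne : f (Pi.single i 1) ≠ 0 := fun h0 => hc (by simp [h0])
    have := hline i (-f 1 / f (Pi.single i 1)) (fun h => absurd h hi)
    rw [div_mul_cancel₀ _ hne] at this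
    linarith
  · have := hrange v
    rw [hexp] at this
    simp only [neg_mul, Finset.sum_neg_distrib, neg_eq_zero]
    exact this

/-- If `c` is a nonnegative relation of minimal support `S`, then no proper subset of `S` supports
a relation `ν` with a positive coefficient: subtract the largest multiple of `ν` that keeps
`c` nonnegative. -/
lemma no_smaller_relation {V : Type*} [AddCommGroup V] [Module ℝ V] (w : Fin n → V →ₗ[ℝ] ℝ)
    (S T : Finset (Fin n)) (hTS : T ⊂ S) (c ν : Fin n → ℝ) (hc : ∀ i, 0 ≤ c i)
    (hcS : ∀ i, c i ≠ 0 ↔ i ∈ S) (hcr : ∀ v, ∑ i, c i * w i v = 0)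
    (hmin : ∀ d : Fin n → ℝ, (∀ i, 0 ≤ d i) → (∃ i, d i ≠ 0) → (∀ i, d i ≠ 0 → i ∈ S) →
      (∀ v, ∑ i, d i * w i v = 0) → ∀ i ∈ S, d i ≠ 0)
    (hνT : ∀ i, i ∉ T → ν i = 0) (hνr : ∀ v, ∑ i, ν i * w i v = 0) (hpos : ∃ i, 0 < ν i) :
    False := by
  classical
  obtain ⟨i₁, hi₁, hle⟩ := Finset.exists_min_image
    (Finset.univ.filter fun i => 0 < ν i) (fun i => c i / ν i)
    (by obtain ⟨i, hi⟩ := hpos; exact ⟨i, by simpa using hi⟩)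
  have hν₁ : 0 < ν i₁ := by simpa using hi₁
  have hi₁S : i₁ ∈ S := hTS.1 (by by_contra h; exact hν₁.ne' (hνT _ h))
  obtain ⟨j, hjS, hjT⟩ := Finset.exists_of_ssubset hTS
  set t := c i₁ / ν i₁ with ht
  have ht0 : 0 ≤ t := div_nonneg (hc _) hν₁.le
  refine hmin (fun i => c i - t * ν i) (fun i => ?_) ⟨j, ?_⟩ (fun i hi => ?_) (fun v => ?_)
    i₁ hi₁S ?_
  · rcases le_or_gt (ν i) 0 with h | h
    · nlinarith [hc i, mul_nonneg ht0 (neg_nonneg.mpr h)]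
    · have := hle i (by simpa using h)
      rw [le_div_iff₀ h] at this
      linarith
  · simpa [hνT j hjT] using (hcS j).2 hjS
  · by_contra hiS
    have h1 : c i = 0 := by by_contra h; exact hiS ((hcS i).1 h)
    have h2 : ν i = 0 := hνT i fun h => hiS (hTS.1 h)
    exact hi (by simp [h1, h2])
  · have : ∀ i, (c i - t * ν i) * w i v = c i * w i v - t * (ν i * w i v) := fun i => by ring
    simp_rw [this]
    rw [Finset.sum_sub_distrib, ← Finset.mul_sum, hcr, hνr]; simp
  · simp [ht, div_mul_cancel₀ _ hν₁.ne']

lemma mem_signed_inter {V : Type*} [NormedAddCommGroup V] [NormedSpace ℝ V]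
    (ω : Fin n → V →ₗ[ℝ] ℝ) (A B : Finset (Fin n)) (v : V) :
    v ∈ (⋂ i ∈ A, Hplus ω i) ∩ (⋂ j ∈ B, Hminus ω j) ↔
      (∀ i ∈ A, 0 < ω i v) ∧ ∀ i ∈ B, ω i v < 0 := by
  simp [Hplus, Hminus]

lemma exists_signedCircuit {V : Type*} [NormedAddCommGroup V] [NormedSpace ℝ V]
    (ω : Fin n → V →ₗ[ℝ] ℝ) (σ : Finset (Fin n))
    (h : ¬ ∃ v, ∀ i, 0 < sgnOf σ i * ω i v) :
    ∃ C ∈ signedCircuits ω, C.1 ⊆ σ ∧ C.2 ⊆ σᶜ := by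
  classical
  let w : Fin n → V →ₗ[ℝ] ℝ := fun i => sgnOf σ i • ω i
  let P : Set (Finset (Fin n)) := {S | ∃ c : Fin n → ℝ, (∀ i, 0 ≤ c i) ∧ (∃ i, c i ≠ 0) ∧
    (∀ i, c i ≠ 0 ↔ i ∈ S) ∧ ∀ v, ∑ i, c i * w i v = 0}
  have hPne : P.Nonempty := by
    obtain ⟨c, h0, h1, -, h3⟩ := gordan w Finset.univ (by simpa [w] using h)
    exact ⟨Finset.univ.filter fun i => c i ≠ 0, c, h0, h1, by simp, h3⟩
  obtain ⟨S, hS⟩ := (Set.toFinite P).exists_minimal hPne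
  obtain ⟨c, hc0, ⟨i₀, hi₀⟩, hcS, hcr⟩ := hS.prop
  have hmin : ∀ d : Fin n → ℝ, (∀ i, 0 ≤ d i) → (∃ i, d i ≠ 0) → (∀ i, d i ≠ 0 → i ∈ S) →
      (∀ v, ∑ i, d i * w i v = 0) → ∀ i ∈ S, d i ≠ 0 := by
    intro d h0 h1 h2 h3 i hi
    have hle := hS.le_of_le (y := Finset.univ.filter fun i => d i ≠ 0)
      ⟨d, h0, h1, by simp, h3⟩ (fun i hi => h2 i (by simpa using hi))
    simpa using hle hi
  refine ⟨(S ∩ σ, S \ σ), ⟨?_, ?_, ?_⟩, Finset.inter_subset_right, fun i hi => by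
    simp at hi ⊢; exact hi.2⟩
  · exact Finset.disjoint_left.2 fun i hi hi' => by simp at hi hi'; exact hi'.2 hi.2
  · -- pairing the relation `c` with a common point would give a positive sum
    rw [Set.eq_empty_iff_forall_notMem]
    intro v hv
    rw [mem_signed_inter] at hv
    have hpos : ∀ i ∈ S, 0 < w i v := by
      intro i hi
      by_cases hσ : i ∈ σ
      · simpa [w, sgnOf, hσ] using hv.1 i (by simp [hi, hσ])
      · simpa [w, sgnOf, hσ] using hv.2 i (by simp [hi, hσ])
    have : 0 < ∑ i, c i * w i v := by
      refine Finset.sum_pos' (fun i _ => ?_) ⟨i₀, Finset.mem_univ _, ?_⟩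
      · by_cases hi : i ∈ S
        · exact mul_nonneg (hc0 i) (hpos i hi).le
        · have : c i = 0 := by by_contra h; exact hi ((hcS i).1 h)
          simp [this]
      · exact mul_pos (lt_of_le_of_ne (hc0 _) (Ne.symm hi₀)) (hpos _ ((hcS _).1 hi₀))
    exact this.ne' (hcr v)
  · rintro ⟨A, B⟩ hAB hlt
    have hlt' : A ∪ B ⊂ S := by
      have : S ∩ σ ∪ S \ σ = S := by ext i; simp; tauto
      simpa [this] using hlt
    by_contra hne
    obtain ⟨μ, hμ0, ⟨k, hk⟩, hμT, hμr⟩ := gordan (fun i => sgnOf A i • ω i) (A ∪ B) (by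
      rintro ⟨v, hv⟩
      refine hne ⟨v, (mem_signed_inter ω A B v).2 ⟨fun i hi => ?_, fun i hi => ?_⟩⟩
      · simpa [sgnOf, hi] using hv i (by simp [hi])
      · have hiA : i ∉ A := fun h => Finset.disjoint_left.1 hAB h hi
        simpa [sgnOf, hiA] using hv i (by simp [hi]))
    -- `μ` rewritten as a relation among the `w i`
    let ν : Fin n → ℝ := fun i => sgnOf σ i * sgnOf A i * μ i
    have hνT : ∀ i, i ∉ A ∪ B → ν i = 0 := fun i hi => by simp [ν, hμT i hi]
    have hνr : ∀ v, ∑ i, ν i * w i v = 0 := by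
      intro v
      rw [← hμr v]
      refine Finset.sum_congr rfl fun i _ => ?_
      simp only [ν, w, LinearMap.smul_apply, smul_eq_mul]
      linear_combination (sgnOf A i * μ i * ω i v) * sgnOf_mul_self σ i
    have hνk : ν k ≠ 0 := by
      have h1 := sgnOf_mul_self σ k
      have h2 := sgnOf_mul_self A k
      have h1' : sgnOf σ k ≠ 0 := fun h => by simp [h] at h1
      have h2' : sgnOf A k ≠ 0 := fun h => by simp [h] at h2
      exact mul_ne_zero (mul_ne_zero h1' h2') hk
    rcases lt_or_gt_of_ne hνk with hlt0 | hgt0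
    · refine no_smaller_relation w S (A ∪ B) hlt' c (fun i => - ν i) hc0 hcS hcr hmin
        (fun i hi => by simp [hνT i hi]) (fun v => ?_) ⟨k, by simpa using hlt0⟩
      simp [hνr v]
    · exact no_smaller_relation w S (A ∪ B) hlt' c ν hc0 hcS hcr hmin hνT hνr ⟨k, hgt0⟩

/-! ### Idempotents of the cube -/

/-- The polynomial `∏_{i∈σ} x i · ∏_{i∉σ} (1 - x i)`, which represents the indicator function of the
chamber with sign vector `σ`. -/
noncomputable def signIdem (σ : Finset (Fin n)) : MvPolynomial (Fin n) ℚ :=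
  (∏ a ∈ σ, X a) * ∏ a ∈ σᶜ, (1 - X a)

/-- The indicator vector of `σ`, a point at which polynomials are evaluated. -/
def indVec (σ : Finset (Fin n)) (i : Fin n) : ℚ := if i ∈ σ then 1 else 0

lemma sum_signIdem : ∑ σ : Finset (Fin n), signIdem σ = 1 := by
  classical
  have := Finset.prod_add (fun a : Fin n => (X a : MvPolynomial (Fin n) ℚ))
    (fun a => 1 - X a) Finset.univ
  simp only [add_sub_cancel, Finset.prod_const_one, Finset.powerset_univ] at this
  rw [this]
  rfl

lemma mul_signIdem_sub_mem (𝒞 : Set (Finset (Fin n) × Finset (Fin n))) (σ : Finset (Fin n))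
    (p : MvPolynomial (Fin n) ℚ) :
    p * signIdem σ - C (eval (indVec σ) p) * signIdem σ ∈ pIdeal 𝒞 := by
  classical
  induction p using MvPolynomial.induction_on with
  | C a => simp
  | add p q hp hq =>
    have := Ideal.add_mem _ hp hq
    convert this using 1
    simp only [map_add]; ring
  | mul_X p i hp =>
    have hX : (X i ^ 2 - X i : MvPolynomial (Fin n) ℚ) ∈ pIdeal 𝒞 :=
      Ideal.subset_span (Or.inl ⟨i, rfl⟩)
    have hi : X i * signIdem σ - C (indVec σ i) * signIdem σ ∈ pIdeal 𝒞 := by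
      by_cases h : i ∈ σ
      · have : signIdem σ = X i * ((∏ a ∈ σ.erase i, X a) * ∏ a ∈ σᶜ, (1 - X a)) := by
          rw [signIdem, ← Finset.mul_prod_erase σ _ h, mul_assoc]
        rw [this]
        convert Ideal.mul_mem_right
          ((∏ a ∈ σ.erase i, X a) * ∏ a ∈ σᶜ, (1 - X a)) _ hX using 1
        simp only [indVec, h, if_true, map_one]; ring
      · have : signIdem σ = (1 - X i) * ((∏ a ∈ σ, X a) * ∏ a ∈ σᶜ.erase i, (1 - X a)) := by
          rw [signIdem, ← Finset.mul_prod_erase σᶜ _ (Finset.mem_compl.2 h)]; ring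
        rw [this]
        convert Ideal.mul_mem_right
          (-((∏ a ∈ σ, X a) * ∏ a ∈ σᶜ.erase i, (1 - X a))) _ hX using 1
        simp only [indVec, h, if_false, map_zero]; ring
    convert Ideal.add_mem _ (Ideal.mul_mem_left _ (X i) hp)
      (Ideal.mul_mem_left _ (C (eval (indVec σ) p)) hi) using 1
    simp only [map_mul, eval_X]; ring

lemma sub_sum_mem_pIdeal (𝒞 : Set (Finset (Fin n) × Finset (Fin n)))
    (p : MvPolynomial (Fin n) ℚ) :
    p - ∑ σ : Finset (Fin n), C (eval (indVec σ) p) * signIdem σ ∈ pIdeal 𝒞 := by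
  have h : p - ∑ σ : Finset (Fin n), C (eval (indVec σ) p) * signIdem σ =
      ∑ σ : Finset (Fin n), (p * signIdem σ - C (eval (indVec σ) p) * signIdem σ) := by
    rw [Finset.sum_sub_distrib, ← Finset.mul_sum, sum_signIdem, mul_one]
  rw [h]
  exact Ideal.sum_mem _ fun σ _ => mul_signIdem_sub_mem 𝒞 σ p

/-! ### Chambers and the Heaviside map -/

/-- The positive part of the sign vector of a point. -/
noncomputable def posSet (ω : Fin n → V →ₗ[ℝ] ℝ) (v : V) : Finset (Fin n) :=
  Finset.univ.filter fun i => 0 < ω i v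

lemma aeval_heaviside_apply (ω : Fin n → V →ₗ[ℝ] ℝ) (p : MvPolynomial (Fin n) ℚ) (v : M₁ ω) :
    (aeval (heaviside ω) p : LocallyConstant (M₁ ω) ℚ) v =
      eval (indVec (posSet ω v.1)) p := by
  induction p using MvPolynomial.induction_on with
  | C a => simp [LocallyConstant.coe_algebraMap]
  | add p q hp hq => simp [hp, hq]
  | mul_X p i hp => simp [hp, heaviside, indVec, posSet]

lemma eval_signIdem (σ τ : Finset (Fin n)) :
    eval (indVec σ) (signIdem τ) = if τ = σ then 1 else 0 := by
  classical
  simp only [signIdem, map_mul, map_prod, eval_X, map_sub, map_one]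
  split_ifs with h
  · subst h
    rw [Finset.prod_eq_one, Finset.prod_eq_one, one_mul]
    · intro i hi; simp [indVec, Finset.mem_compl.1 hi]
    · intro i hi; simp [indVec, hi]
  · by_cases hsub : τ ⊆ σ
    · obtain ⟨i, hi, hi'⟩ : ∃ i ∈ σ, i ∉ τ := by
        by_contra! hc
        exact h (Finset.Subset.antisymm hsub hc)
      rw [Finset.prod_eq_zero (s := τᶜ) (i := i) (by simpa using hi') (by simp [indVec, hi]),
        mul_zero]
    · obtain ⟨i, hi, hi'⟩ := Finset.not_subset.1 hsub
      rw [Finset.prod_eq_zero (i := i) hi (by simp [indVec, hi']), zero_mul]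

/-- Locally constant functions are constant on chambers: the segment joining two points with the
same signs stays in the complement. -/
lemma locallyConstant_eq_of_posSet_eq (ω : Fin n → V →ₗ[ℝ] ℝ) (g : LocallyConstant (M₁ ω) ℚ)
    (v v' : M₁ ω) (h : posSet ω v.1 = posSet ω v'.1) : g v = g v' := by
  have hsign : ∀ i, 0 < ω i v.1 ↔ 0 < ω i v'.1 := fun i => by
    simpa [posSet] using Finset.ext_iff.1 h i
  have hseg : segment ℝ v.1 v'.1 ⊆ M₁ ω := by
    rintro x ⟨a, b, ha, hb, hab, rfl⟩ i hx
    simp only [map_add, map_smul, smul_eq_mul] at hx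
    have hb' : b = 1 - a := by linarith
    subst hb'
    have h1 := v.2 i
    have h2 := v'.2 i
    rcases lt_or_gt_of_ne h1 with hv | hv
    · have hv' : ω i v'.1 < 0 :=
        lt_of_le_of_ne (not_lt.1 fun h0 => not_lt.2 hv.le ((hsign i).2 h0)) h2
      rcases ha.eq_or_lt with rfl | ha
      · linarith
      · nlinarith [mul_pos ha (neg_pos.2 hv), mul_nonneg hb (neg_pos.2 hv').le]
    · have hv' := (hsign i).1 hv
      rcases ha.eq_or_lt with rfl | ha
      · linarith
      · nlinarith [mul_pos ha hv, mul_nonneg hb hv'.le]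
  have hpre : IsPreconnected ((↑) ⁻¹' segment ℝ v.1 v'.1 : Set (M₁ ω)) := by
    refine Topology.IsInducing.subtypeVal.isPreconnected_image.1 ?_
    rw [Subtype.image_preimage_coe, Set.inter_eq_right.2 hseg]
    exact (convex_segment _ _).isPreconnected
  exact g.isLocallyConstant.apply_eq_of_isPreconnected hpre
    (left_mem_segment ℝ _ _) (right_mem_segment ℝ _ _)

lemma aeval_heaviside_surjective (ω : Fin n → V →ₗ[ℝ] ℝ) :
    Function.Surjective (aeval (heaviside ω) :
      MvPolynomial (Fin n) ℚ →ₐ[ℚ] LocallyConstant (M₁ ω) ℚ) := by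
  classical
  intro g
  let val : Finset (Fin n) → ℚ := fun σ =>
    if h : ∃ v : M₁ ω, posSet ω v.1 = σ then g h.choose else 0
  refine ⟨∑ σ : Finset (Fin n), C (val σ) * signIdem σ, ?_⟩
  ext v
  rw [aeval_heaviside_apply]
  simp only [map_sum, map_mul, eval_C, eval_signIdem, mul_ite, mul_one, mul_zero,
    Finset.sum_ite_eq', Finset.mem_univ, if_true]
  have hex : ∃ v' : M₁ ω, posSet ω v'.1 = posSet ω v.1 := ⟨v, rfl⟩
  simp only [val, dif_pos hex]
  exact locallyConstant_eq_of_posSet_eq ω g _ _ hex.choose_spec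

lemma signIdem_mem_of_infeasible (ω : Fin n → V →ₗ[ℝ] ℝ) (σ : Finset (Fin n))
    (h : ¬ ∃ v, ∀ i, 0 < sgnOf σ i * ω i v) : signIdem σ ∈ pIdeal (signedCircuits ω) := by
  obtain ⟨D, hD, h1, h2⟩ := exists_signedCircuit ω σ h
  have hgen : ((∏ a ∈ D.1, X a) * ∏ a ∈ D.2, (1 - X a) : MvPolynomial (Fin n) ℚ) ∈
      pIdeal (signedCircuits ω) := Ideal.subset_span (Or.inr ⟨D, hD, rfl⟩)
  exact Ideal.mem_of_dvd _ (mul_dvd_mul (Finset.prod_dvd_prod_of_subset _ _ _ h1)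
    (Finset.prod_dvd_prod_of_subset _ _ _ h2)) hgen

lemma ker_aeval_heaviside (ω : Fin n → V →ₗ[ℝ] ℝ) :
    RingHom.ker (aeval (heaviside ω) :
      MvPolynomial (Fin n) ℚ →ₐ[ℚ] LocallyConstant (M₁ ω) ℚ) = pIdeal (signedCircuits ω) := by
  classical
  apply le_antisymm
  · intro p hp
    rw [RingHom.mem_ker] at hp
    have hsum : ∑ σ : Finset (Fin n), C (eval (indVec σ) p) * signIdem σ ∈
        pIdeal (signedCircuits ω) := by
      refine Ideal.sum_mem _ fun σ _ => ?_
      by_cases hσ : ∃ v, ∀ i, 0 < sgnOf σ i * ω i v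
      · obtain ⟨v, hv⟩ := hσ
        have hvM : v ∈ M₁ ω := fun i h0 => by simpa [h0] using hv i
        have hpos : posSet ω v = σ := by
          ext i
          have := hv i
          by_cases hi : i ∈ σ
          · simpa [posSet, sgnOf, hi] using this
          · simp only [sgnOf, hi, if_false] at this
            simp only [posSet, Finset.mem_filter, Finset.mem_univ, true_and, hi, iff_false]
            linarith
        have h0 := aeval_heaviside_apply ω p ⟨v, hvM⟩
        rw [hp, hpos] at h0
        simp [← h0]
      · exact Ideal.mul_mem_left _ _ (signIdem_mem_of_infeasible ω σ hσ)
    simpa using Ideal.add_mem _ (sub_sum_mem_pIdeal (signedCircuits ω) p) hsum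
  · refine Ideal.span_le.2 ?_
    rintro p (⟨a, rfl⟩ | ⟨D, hD, rfl⟩)
    · rw [SetLike.mem_coe, RingHom.mem_ker]
      ext v
      rw [aeval_heaviside_apply]
      simp [indVec]
    · rw [SetLike.mem_coe, RingHom.mem_ker]
      ext v
      rw [aeval_heaviside_apply]
      have hv : v.1 ∉ (⋂ i ∈ D.1, Hplus ω i) ∩ (⋂ j ∈ D.2, Hminus ω j) := by
        rw [hD.2.1]; simp
      rw [mem_signed_inter, not_and_or] at hv
      simp only [map_mul, map_prod, eval_X, map_sub, map_one, LocallyConstant.coe_zero,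
        Pi.zero_apply]
      rcases hv with hv | hv
      · push Not at hv
        obtain ⟨i, hi, hle⟩ := hv
        rw [Finset.prod_eq_zero hi (by simp [indVec, posSet, hle]), zero_mul]
      · push Not at hv
        obtain ⟨i, hi, hle⟩ := hv
        have hlt : 0 < ω i v.1 := lt_of_le_of_ne hle (v.2 i).symm
        rw [Finset.prod_eq_zero (s := D.2) hi (by simp [indVec, posSet, hlt]), mul_zero]

/-- The `ℚ`-algebra map `P(𝒞(𝒜)) → H⁰(M₁(𝒜))` sending `x i` to the
Heaviside function `x i` is a well-defined isomorphism. -/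
theorem pAlg_iso_locallyConstant (ω : Fin n → V →ₗ[ℝ] ℝ) (hω : ∀ i, ω i ≠ 0)
    (hprop : ∀ i j : Fin n, i ≠ j → ∀ c : ℝ, ω i ≠ c • ω j) :
    ∃ f : PAlg (signedCircuits ω) ≃ₐ[ℚ] LocallyConstant (M₁ ω) ℚ,
      ∀ i : Fin n, f (Ideal.Quotient.mk (pIdeal (signedCircuits ω)) (X i)) =
        heaviside ω i := by
  let e := Ideal.quotientEquivAlgOfEq ℚ (ker_aeval_heaviside ω).symm
  refine ⟨e.trans (Ideal.quotientKerAlgEquivOfSurjective (aeval_heaviside_surjective ω)),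
    fun i => ?_⟩
  simp only [AlgEquiv.trans_apply, e, Ideal.quotientEquivAlgOfEq_mk]
  exact (aeval_X (heaviside ω) i)
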